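/- Convergence of the expected coloring ratio for the binomial model: for every dimension d ≥ 1, every k ≥ 1, and every ν > 0, one has lim_{n→∞} E[H_{k,(ν/n)^{1/d}}(n)]/n = a_{k,ν}. -/

import Mathlib

/-!
`E[F_{k,λ}(t)]` is the mean of `N_{k,1}` over the points of a Poisson process of intensity `λ` in a
cube of side `t`. A cube of side `T` is covered by `m ^ d` cubes of side `t`, with `m = ⌈T / t⌉`; as
`N_{k,1}` is monotone and subadditive, `E[F(T)] ≤ m ^ d * E[F(t)]`. Dividing by the volume,
`F̄(T) ≤ (1 + t / T) ^ d * F̄(t)`, so `F̄` converges to its infimum at infinity.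

Adding a point changes `N_{k,r}` by at most one, so `n ↦ E[H_{k,r}(n)]` is 1-Lipschitz. If
`λ t ^ d = n`, then `E[F_{k,λ}(t)]` averages it over a Poisson variable of mean `n` and standard
deviation `√n`, so `E[H_{k,1/t}(n)] / n` and `F̄_{k,λ}(t)` differ by at most `1 / √n`.
-/

open MeasureTheory ProbabilityTheory Filter

noncomputable instance instDecEqEuclidean (d : ℕ) :
    DecidableEq (EuclideanSpace ℝ (Fin d)) := Classical.decEq _

/-- `maxColorable d k r V` is the maximum number of vertices of the geometric
graph `G_r(V)` (edges between distinct points of `V` at Euclidean distance at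
most `r`) that can be properly colored with `k` colors, i.e. the maximum
cardinality of a subset `S ⊆ V` admitting a proper `k`-coloring. -/
noncomputable def maxColorable (d k : ℕ) (r : ℝ)
    (V : Finset (EuclideanSpace ℝ (Fin d))) : ℕ :=
  sSup {m : ℕ | ∃ S : Finset (EuclideanSpace ℝ (Fin d)), S ⊆ V ∧ S.card = m ∧
    ∃ c : EuclideanSpace ℝ (Fin d) → Fin k,
      ∀ u ∈ S, ∀ v ∈ S, u ≠ v → dist u v ≤ r → c u ≠ c v}

/-- The unit cube `[0,1]^d`. -/
def unitCube (d : ℕ) : Set (EuclideanSpace ℝ (Fin d)) :=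
  {x | ∀ i, x i ∈ Set.Icc (0 : ℝ) 1}

/-- The uniform distribution on the unit cube `[0,1]^d` (Lebesgue measure
restricted to the cube, which has total mass one). -/
noncomputable def uniformCube (d : ℕ) : Measure (EuclideanSpace ℝ (Fin d)) :=
  volume.restrict (unitCube d)

/-- `EH d k r n = E[H_{k,r}(n)] = E[N_{k,r}({X_1,…,X_n})]` for `X_1,…,X_n`
i.i.d. uniform on the unit cube `[0,1]^d`. -/
noncomputable def EH (d k : ℕ) (r : ℝ) (n : ℕ) : ℝ :=
  ∫ x : Fin n → EuclideanSpace ℝ (Fin d),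
    (maxColorable d k r (Finset.image x Finset.univ) : ℝ)
    ∂(Measure.pi fun _ => uniformCube d)

/-- `EF d k lam t = E[F_{k,lam}(t)] = ∑_n P(Po(lam t^d) = n) E[H_{k,1/t}(n)]`,
the expected maximum number of `k`-colorable vertices of the unit-distance
geometric graph on a Poisson process of intensity `lam` in `[0,t]^d`. -/
noncomputable def EF (d k : ℕ) (lam t : ℝ) : ℝ :=
  ∑' n : ℕ, poissonPMFReal (Real.toNNReal (lam * t ^ d)) n * EH d k (1 / t) n

/-- The normalized expectation `\bar F_{k,lam}(t) = E[F_{k,lam}(t)]/(lam t^d)`. -/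
noncomputable def Fbar (d k : ℕ) (lam t : ℝ) : ℝ :=
  EF d k lam t / (lam * t ^ d)

/-- The constant `a_{k,lam} = inf_{t>0} \bar F_{k,lam}(t)`. -/
noncomputable def aConst (d k : ℕ) (lam : ℝ) : ℝ :=
  sInf {x : ℝ | ∃ t : ℝ, 0 < t ∧ x = Fbar d k lam t}

/-- The volume `V_d(r) = π^{d/2} r^d / Γ(d/2 + 1)` of the `d`-dimensional
Euclidean ball of radius `r`. -/
noncomputable def ballVol (d : ℕ) (r : ℝ) : ℝ :=
  Real.pi ^ ((d : ℝ) / 2) * r ^ d / Real.Gamma ((d : ℝ) / 2 + 1)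

section ColorableSubsets

/-- The geometric graph `G_r` on a whole metric space; `G_r(V)` is its induced subgraph on `V`. -/
def geometricGraph (X : Type*) [PseudoMetricSpace X] (r : ℝ) : SimpleGraph X where
  Adj u v := u ≠ v ∧ dist u v ≤ r
  symm := ⟨fun _ _ h => ⟨h.1.symm, dist_comm (_ : X) _ ▸ h.2⟩⟩
  loopless := ⟨fun _ h => h.1 rfl⟩

variable {d k : ℕ} {r : ℝ} {S V W : Finset (EuclideanSpace ℝ (Fin d))}

lemma card_le_maxColorable (hSV : S ⊆ V)
    (hS : ((geometricGraph _ r).induce (S : Set (EuclideanSpace ℝ (Fin d)))).Colorable k) :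
    S.card ≤ maxColorable d k r V := by
  obtain rfl | ⟨v, hv⟩ := S.eq_empty_or_nonempty
  · simp
  obtain ⟨C⟩ := hS
  refine le_csSup ⟨V.card, ?_⟩ ⟨S, hSV, rfl, Function.extend (↑) C fun _ => C ⟨v, hv⟩, ?_⟩
  · rintro _ ⟨T, hTV, rfl, -⟩
    exact Finset.card_le_card hTV
  · intro u hu w hw hne hdist
    have hval : ∀ x (hx : x ∈ S),
        Function.extend (↑) C (fun _ => C ⟨v, hv⟩) x = C ⟨x, hx⟩ := fun x hx =>
      Subtype.val_injective.extend_apply C _ ⟨x, hx⟩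
    rw [hval u hu, hval w hw]
    exact C.valid ⟨hne, hdist⟩

lemma exists_card_eq_maxColorable (d k : ℕ) (r : ℝ) (V : Finset (EuclideanSpace ℝ (Fin d))) :
    ∃ S ⊆ V, S.card = maxColorable d k r V ∧
      ((geometricGraph _ r).induce (S : Set (EuclideanSpace ℝ (Fin d)))).Colorable k := by
  unfold maxColorable
  set M := {m : ℕ | ∃ S : Finset (EuclideanSpace ℝ (Fin d)), S ⊆ V ∧ S.card = m ∧
    ∃ c : EuclideanSpace ℝ (Fin d) → Fin k,
      ∀ u ∈ S, ∀ v ∈ S, u ≠ v → dist u v ≤ r → c u ≠ c v}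
  obtain hM | hM := M.eq_empty_or_nonempty
  · have : IsEmpty ((∅ : Finset (EuclideanSpace ℝ (Fin d))) : Set (EuclideanSpace ℝ (Fin d))) := by
      simp
    exact ⟨∅, by simp, by simp [hM], .of_isEmpty _⟩
  · obtain ⟨S, hSV, hcard, c, hc⟩ := Nat.sSup_mem hM
      ⟨V.card, by rintro _ ⟨T, hTV, rfl, -⟩; exact Finset.card_le_card hTV⟩
    exact ⟨S, hSV, hcard, ⟨.mk (fun v => c v) fun {u v} h => hc u u.2 v v.2 h.1 h.2⟩⟩

lemma maxColorable_le_card : maxColorable d k r V ≤ V.card := by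
  obtain ⟨S, hSV, hcard, -⟩ := exists_card_eq_maxColorable d k r V
  exact hcard ▸ Finset.card_le_card hSV

@[gcongr]
lemma maxColorable_mono (hVW : V ⊆ W) : maxColorable d k r V ≤ maxColorable d k r W := by
  obtain ⟨S, hSV, hcard, hS⟩ := exists_card_eq_maxColorable d k r V
  exact hcard ▸ card_le_maxColorable (hSV.trans hVW) hS

lemma maxColorable_union_le (V W : Finset (EuclideanSpace ℝ (Fin d))) :
    maxColorable d k r (V ∪ W) ≤ maxColorable d k r V + maxColorable d k r W := by
  obtain ⟨S, hSVW, hcard, hS⟩ := exists_card_eq_maxColorable d k r (V ∪ W)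
  have hinter : ∀ T, (S ∩ T).card ≤ maxColorable d k r T := fun T =>
    card_le_maxColorable Finset.inter_subset_right
      (hS.of_hom ((geometricGraph _ r).induceHomOfLE (by simp)).toHom)
  calc maxColorable d k r (V ∪ W) = (S ∩ V ∪ S ∩ W).card := by
        rw [← Finset.inter_union_distrib_left, Finset.inter_eq_left.2 hSVW, hcard]
    _ ≤ (S ∩ V).card + (S ∩ W).card := Finset.card_union_le _ _
    _ ≤ maxColorable d k r V + maxColorable d k r W := add_le_add (hinter V) (hinter W)

lemma maxColorable_insert_le (v : EuclideanSpace ℝ (Fin d))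
    (V : Finset (EuclideanSpace ℝ (Fin d))) :
    maxColorable d k r (insert v V) ≤ maxColorable d k r V + 1 := by
  rw [Finset.insert_eq, add_comm]
  exact (maxColorable_union_le _ _).trans (by gcongr; exact maxColorable_le_card)

lemma maxColorable_biUnion_le {ι : Type*} (s : Finset ι)
    (V : ι → Finset (EuclideanSpace ℝ (Fin d))) :
    maxColorable d k r (s.biUnion V) ≤ ∑ i ∈ s, maxColorable d k r (V i) := by
  classical
  induction s using Finset.induction_on with
  | empty => exact maxColorable_le_card
  | insert i s hi ih =>
    rw [Finset.biUnion_insert, Finset.sum_insert hi]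
    exact (maxColorable_union_le _ _).trans (by gcongr)

lemma maxColorable_image_le_of_dist_le {ι : Type*} [Fintype ι] {s : ℝ}
    {x y : ι → EuclideanSpace ℝ (Fin d)} (hne : ∀ i j, x i ≠ x j → y i ≠ y j)
    (hdist : ∀ i j, dist (y i) (y j) ≤ s → dist (x i) (x j) ≤ r) :
    maxColorable d k r (Finset.univ.image x) ≤ maxColorable d k s (Finset.univ.image y) := by
  obtain ⟨S, hSx, hcard, hS⟩ := exists_card_eq_maxColorable d k r (Finset.univ.image x)
  obtain ⟨A, -, hA, rfl⟩ := Finset.exists_subset_injOn_image_eq_of_surjOn Set.univ S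
    (f := x) fun u hu => by simpa using hSx hu
  have hyA : Set.InjOn y A := fun i hi j hj hij => hA hi hj (by_contra fun h => hne i j h hij)
  rw [← hcard, Finset.card_image_of_injOn hA, ← Finset.card_image_of_injOn hyA]
  refine card_le_maxColorable (Finset.image_subset_image (Finset.subset_univ A)) ?_
  choose i hiA hyi using fun w : A.image y => Finset.mem_image.1 w.2
  refine hS.of_hom (⟨fun w => ⟨x (i w), Finset.mem_image_of_mem x (hiA w)⟩,
    fun {u v} huv => ⟨fun h => huv.1 ?_, hdist _ _ ?_⟩⟩ :
      (geometricGraph _ s).induce _ →g (geometricGraph _ r).induce _)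
  · exact (hyi u).symm.trans ((congrArg y (hA (hiA u) (hiA v) h)).trans (hyi v))
  · rw [hyi, hyi]
    exact huv.2

lemma maxColorable_image_of_dist_eq_mul {c : ℝ} (hc : 0 < c)
    {f : EuclideanSpace ℝ (Fin d) → EuclideanSpace ℝ (Fin d)}
    (hf : ∀ u v, dist (f u) (f v) = c * dist u v) (V : Finset (EuclideanSpace ℝ (Fin d))) :
    maxColorable d k r (V.image f) = maxColorable d k (r / c) V := by
  have hne : ∀ u v, f u ≠ f v ↔ u ≠ v := fun u v => by
    rw [← dist_pos, hf, ← dist_pos, mul_pos_iff_of_pos_left hc]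
  have hdist : ∀ u v, dist (f u) (f v) ≤ r ↔ dist u v ≤ r / c := fun u v => by
    rw [hf, le_div_iff₀' hc]
  have hV : Finset.univ.image ((↑) : V → EuclideanSpace ℝ (Fin d)) = V := by simp
  rw [← hV, Finset.image_image]
  exact le_antisymm
    (maxColorable_image_le_of_dist_le (fun _ _ => (hne _ _).1) fun _ _ => (hdist _ _).2)
    (maxColorable_image_le_of_dist_le (fun _ _ => (hne _ _).2) fun _ _ => (hdist _ _).1)

lemma measurable_maxColorable_image (d k : ℕ) (r : ℝ) (ι : Type*) [Fintype ι] :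
    Measurable fun x : ι → EuclideanSpace ℝ (Fin d) =>
      maxColorable d k r (Finset.univ.image x) := by
  -- `N_{k,r}` depends on a sample only through its coincidences and adjacencies, which take
  -- finitely many values.
  let pattern (x : ι → EuclideanSpace ℝ (Fin d)) (i j : ι) : Prop × Prop :=
    (x i = x j, dist (x i) (x j) ≤ r)
  have hpattern : Measurable pattern := by
    refine measurable_pi_lambda _ fun i => measurable_pi_lambda _ fun j => .prodMk ?_ ?_
    · exact measurableSet_setOfPred.1 (measurableSet_eq_fun (by fun_prop) (by fun_prop))
    · exact measurableSet_setOfPred.1 (measurableSet_le (by fun_prop) (by fun_prop))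
  have hle : ∀ x y, pattern x = pattern y → maxColorable d k r (Finset.univ.image x) ≤
      maxColorable d k r (Finset.univ.image y) := fun x y hxy => by
    have hrel : ∀ i j, (x i = x j ↔ y i = y j) ∧ (dist (x i) (x j) ≤ r ↔ dist (y i) (y j) ≤ r) :=
      fun i j => by simpa [pattern] using congr_fun₂ hxy i j
    exact maxColorable_image_le_of_dist_le (fun i j => (hrel i j).1.not.1) fun i j => (hrel i j).2.2
  obtain ⟨g, hg⟩ := (Function.factorsThrough_iff _).1 fun x y hxy =>
    (hle x y hxy).antisymm (hle y x hxy.symm)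
  rw [hg]
  exact (Measurable.of_discrete (f := g)).comp hpattern

end ColorableSubsets

section PoissonMean

open scoped ENNReal NNReal Nat

lemma image_univ_comp_equiv {X ι ι' : Type*} [DecidableEq X] [Fintype ι] [Fintype ι'] (x : ι' → X)
    (e : ι ≃ ι') : Finset.univ.image (x ∘ e) = Finset.univ.image x := by
  classical rw [← Finset.image_image, Finset.image_univ_equiv]

lemma sum_indicator_filter_image {X ι : Type*} [DecidableEq X] [Fintype ι] [DecidableEq ι]
    {M : Type*} [AddCommMonoid M] (Q : Set X) [DecidablePred (· ∈ Q)] (Φ : Finset X → M)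
    (x : ι → X) :
    ∑ A : Finset ι, (Set.univ.pi fun i => if i ∈ A then Q else Qᶜ).indicator
      (fun y => Φ (Finset.univ.image fun i : A => y i)) x =
        Φ ((Finset.univ.image x).filter (· ∈ Q)) := by
  set A₀ : Finset ι := Finset.univ.filter (x · ∈ Q) with hA₀
  have hmem : ∀ A : Finset ι, (x ∈ Set.univ.pi fun i => if i ∈ A then Q else Qᶜ) ↔ A = A₀ := by
    intro A
    simp only [Set.mem_univ_pi, Finset.ext_iff, hA₀, Finset.mem_filter_univ]
    refine forall_congr' fun i => ?_
    split_ifs with hi <;> simp [hi]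
  rw [Finset.sum_eq_single_of_mem A₀ (Finset.mem_univ _) fun A _ hA =>
    Set.indicator_of_notMem (mt (hmem A).1 hA) _, Set.indicator_of_mem ((hmem A₀).2 rfl)]
  rw [Finset.filter_image, ← hA₀]
  congr 1
  ext u
  simp

lemma measurableSet_univ_pi_ite {X ι : Type*} [MeasurableSpace X] [Countable ι] {Q : Set X}
    (hQ : MeasurableSet Q) [DecidableEq ι] (A : Finset ι) :
    MeasurableSet (Set.univ.pi fun i => if i ∈ A then Q else Qᶜ) :=
  .univ_pi fun i => by split_ifs; exacts [hQ, hQ.compl]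

variable {X : Type*} [MeasurableSpace X] [DecidableEq X]

/-- Measurability of a functional of finite point sets, expressed on every ordered sample because
`Finset X` carries no σ-algebra. -/
def MeasurableOnSamples (Φ : Finset X → ℝ≥0∞) : Prop :=
  ∀ n : ℕ, Measurable fun x : Fin n → X => Φ (Finset.univ.image x)

/-- The integral of a functional of finite point sets over samples indexed by `ι` from `μ`; for
a probability measure this is the expectation over `card ι` independent points. -/
noncomputable def sampleIntegral (μ : Measure X) (Φ : Finset X → ℝ≥0∞) (ι : Type*) [Fintype ι] :
    ℝ≥0∞ :=
  ∫⁻ x : ι → X, Φ (Finset.univ.image x) ∂Measure.pi fun _ => μ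

/-- The expectation of a functional `Φ` of the points of a Poisson process with finite intensity
measure `Λ`. The powers of `Λ` are not normalized, which is why the weights are `1 / n!` instead
of Poisson probabilities. -/
noncomputable def poissonMean (Λ : Measure X) (Φ : Finset X → ℝ≥0∞) : ℝ≥0∞ :=
  ENNReal.ofReal (Real.exp (-Λ.real Set.univ)) *
    ∑' n : ℕ, (n ! : ℝ≥0∞)⁻¹ * sampleIntegral Λ Φ (Fin n)

variable {Φ : Finset X → ℝ≥0∞} {ι ι' : Type*} [Fintype ι] [Fintype ι']

lemma MeasurableOnSamples.measurable (hΦ : MeasurableOnSamples Φ) :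
    Measurable fun x : ι → X => Φ (Finset.univ.image x) := by
  let e := Fintype.equivFin ι
  have hcomp : Measurable fun x : ι → X => x ∘ e.symm :=
    measurable_pi_lambda _ fun i => measurable_pi_apply (e.symm i)
  convert (hΦ (Fintype.card ι)).comp hcomp using 2 with x
  exact congrArg Φ (image_univ_comp_equiv x e.symm).symm

lemma sampleIntegral_congr_equiv (μ : Measure X) [SigmaFinite μ] (Φ : Finset X → ℝ≥0∞)
    (e : ι ≃ ι') : sampleIntegral μ Φ ι = sampleIntegral μ Φ ι' := by
  have he := measurePreserving_piCongrLeft (α := fun _ : ι' => X) (fun _ => μ) e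
  refine Eq.trans (lintegral_congr fun x => ?_)
    (he.lintegral_comp_emb (MeasurableEquiv.measurableEmbedding _) _)
  rw [← image_univ_comp_equiv _ e]
  congr 2
  ext i
  simp [MeasurableEquiv.coe_piCongrLeft, Equiv.piCongrLeft_apply_apply]

lemma MeasurableOnSamples.filter (hΦ : MeasurableOnSamples Φ) {Q : Set X} (hQ : MeasurableSet Q)
    [DecidablePred (· ∈ Q)] : MeasurableOnSamples fun V => Φ (V.filter (· ∈ Q)) := fun n => by
  simp_rw [← sum_indicator_filter_image]
  refine Finset.measurable_sum _ fun A _ => Measurable.indicator ?_ (measurableSet_univ_pi_ite hQ A)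
  exact hΦ.measurable.comp (measurable_pi_lambda _ fun i => measurable_pi_apply _)

lemma setLIntegral_univ_pi_ite (hΦ : MeasurableOnSamples Φ) (μ : Measure X) [SigmaFinite μ]
    (Q : Set X) [DecidableEq ι] (A : Finset ι) :
    ∫⁻ x in Set.univ.pi fun i => if i ∈ A then Q else Qᶜ, Φ (Finset.univ.image fun i : A => x i)
      ∂Measure.pi (fun _ => μ) =
    μ Qᶜ ^ (Fintype.card ι - A.card) * sampleIntegral (μ.restrict Q) Φ (Fin A.card) := by
  have hsplit := measurePreserving_piEquivPiSubtypeProd (α := fun _ : ι => X)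
    (fun i => μ.restrict (if i ∈ A then Q else Qᶜ)) (· ∈ A)
  have hinside : (fun i : {i // i ∈ A} => μ.restrict (if (i : ι) ∈ A then Q else Qᶜ)) =
      fun _ => μ.restrict Q := funext fun i => by simp [i.2]
  have houtside : (fun i : {i // i ∉ A} => μ.restrict (if (i : ι) ∈ A then Q else Qᶜ)) =
      fun _ => μ.restrict Qᶜ := funext fun i => by simp [i.2]
  rw [hinside, houtside] at hsplit
  rw [Measure.restrict_pi_pi, ← sampleIntegral_congr_equiv _ _ A.equivFin]
  refine (hsplit.lintegral_comp_emb (MeasurableEquiv.measurableEmbedding _)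
    fun y => Φ (Finset.univ.image y.1)).trans ?_
  rw [lintegral_prod (fun y => Φ (Finset.univ.image y.1))
    (hΦ.measurable.comp measurable_fst).aemeasurable]
  simp_rw [lintegral_const]
  rw [lintegral_mul_const _ hΦ.measurable, mul_comm]
  simp only [Measure.pi_univ, Measure.restrict_apply_univ, Finset.prod_const, Finset.card_univ,
    Fintype.card_subtype_compl, Fintype.card_coe, sampleIntegral]
  congr!

lemma sampleIntegral_filter (hΦ : MeasurableOnSamples Φ) (μ : Measure X) [SigmaFinite μ]
    {Q : Set X} (hQ : MeasurableSet Q) [DecidablePred (· ∈ Q)] (n : ℕ) :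
    sampleIntegral μ (fun V => Φ (V.filter (· ∈ Q))) (Fin n) =
      ∑ j ∈ Finset.range (n + 1),
        n.choose j • (μ Qᶜ ^ (n - j) * sampleIntegral (μ.restrict Q) Φ (Fin j)) := by
  calc sampleIntegral μ (fun V => Φ (V.filter (· ∈ Q))) (Fin n)
      = ∑ A : Finset (Fin n), ∫⁻ x in Set.univ.pi fun i => if i ∈ A then Q else Qᶜ,
          Φ (Finset.univ.image fun i : A => x i) ∂Measure.pi (fun _ => μ) := by
        simp_rw [sampleIntegral, ← sum_indicator_filter_image,
          ← lintegral_indicator (measurableSet_univ_pi_ite hQ _)]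
        refine lintegral_finsetSum _ fun A _ =>
          Measurable.indicator ?_ (measurableSet_univ_pi_ite hQ A)
        exact hΦ.measurable.comp (measurable_pi_lambda _ fun i => measurable_pi_apply _)
    _ = ∑ A : Finset (Fin n),
          μ Qᶜ ^ (n - A.card) * sampleIntegral (μ.restrict Q) Φ (Fin A.card) := by
        simp_rw [setLIntegral_univ_pi_ite hΦ, Fintype.card_fin]
    _ = _ := by
        rw [← Finset.powerset_univ, Finset.sum_powerset_apply_card
          fun j => μ Qᶜ ^ (n - j) * sampleIntegral (μ.restrict Q) Φ (Fin j), Finset.card_fin]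

lemma tsum_mul_tsum_eq_tsum_sum_antidiagonal_ennreal (f g : ℕ → ℝ≥0∞) :
    (∑' n, f n) * ∑' n, g n =
      ∑' n, ∑ p ∈ Finset.HasAntidiagonal.antidiagonal n, f p.1 * g p.2 := by
  calc (∑' n, f n) * ∑' n, g n = ∑' p : ℕ × ℕ, f p.1 * g p.2 := by
        simp_rw [ENNReal.tsum_prod', ENNReal.tsum_mul_left, ENNReal.tsum_mul_right]
    _ = ∑' n, ∑ p ∈ Finset.HasAntidiagonal.antidiagonal n, f p.1 * g p.2 := by
        rw [← Finset.HasAntidiagonal.sigmaAntidiagonalEquivProd.tsum_eq, ENNReal.tsum_sigma']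
        exact tsum_congr fun n => Finset.tsum_subtype _ fun p : ℕ × ℕ => f p.1 * g p.2

lemma tsum_inv_factorial_mul_pow {b : ℝ≥0∞} (hb : b ≠ ∞) :
    ∑' n : ℕ, (n ! : ℝ≥0∞)⁻¹ * b ^ n = ENNReal.ofReal (Real.exp b.toReal) := by
  lift b to ℝ≥0 using hb
  rw [Real.exp_eq_exp_ℝ, NormedSpace.exp_eq_tsum_div,
    ENNReal.ofReal_tsum_of_nonneg (fun n => by positivity) (Real.summable_pow_div_factorial _)]
  refine tsum_congr fun n => ?_
  rw [div_eq_inv_mul, ENNReal.ofReal_mul (by positivity), ENNReal.ofReal_inv_of_pos (by positivity)]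
  simp [ENNReal.ofReal_pow]

lemma inv_factorial_add_mul_choose (i j : ℕ) :
    (((i + j)! : ℕ) : ℝ≥0∞)⁻¹ * (i + j).choose j = (i ! : ℝ≥0∞)⁻¹ * (j ! : ℝ≥0∞)⁻¹ := by
  have hne : ∀ m : ℕ, (m ! : ℝ≥0∞) ≠ 0 := fun m => by exact_mod_cast m.factorial_ne_zero
  have hchoose : ((i + j).choose j : ℝ≥0∞) * (i ! * j !) = (i + j)! := by
    rw [← mul_assoc]
    exact_mod_cast Nat.add_choose_mul_factorial_mul_factorial i j
  rw [← ENNReal.mul_inv (.inl (hne i)) (.inl (by simp))]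
  refine ENNReal.eq_inv_of_mul_eq_one_left ?_
  rw [mul_assoc, hchoose, ENNReal.inv_mul_cancel (hne _) (by simp)]

/-- The restriction theorem for Poisson processes: splitting each sample according to membership
in `Q` turns the series into a Cauchy product, whose other factor is `exp (Λ Qᶜ)`. -/
theorem poissonMean_filter (hΦ : MeasurableOnSamples Φ) (Λ : Measure X) [IsFiniteMeasure Λ]
    {Q : Set X} (hQ : MeasurableSet Q) [DecidablePred (· ∈ Q)] :
    poissonMean Λ (fun V => Φ (V.filter (· ∈ Q))) = poissonMean (Λ.restrict Q) Φ := by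
  have hterm : ∀ n : ℕ, (n ! : ℝ≥0∞)⁻¹ * sampleIntegral Λ (fun V => Φ (V.filter (· ∈ Q))) (Fin n) =
      ∑ p ∈ Finset.HasAntidiagonal.antidiagonal n, ((p.1 ! : ℝ≥0∞)⁻¹ * Λ Qᶜ ^ p.1) *
        ((p.2 ! : ℝ≥0∞)⁻¹ * sampleIntegral (Λ.restrict Q) Φ (Fin p.2)) := fun n => by
    rw [sampleIntegral_filter hΦ Λ hQ, Finset.mul_sum, ← Finset.Nat.sum_antidiagonal_swap,
      Finset.Nat.sum_antidiagonal_eq_sum_range_succ_mk]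
    refine Finset.sum_congr rfl fun j hj => ?_
    obtain ⟨i, rfl⟩ := Nat.exists_eq_add_of_le' (Finset.mem_range_succ_iff.1 hj)
    rw [nsmul_eq_mul, ← mul_assoc, inv_factorial_add_mul_choose]
    simp only [Prod.swap_prod_mk, Nat.add_sub_cancel]
    ring
  have hexp : Real.exp (-Λ.real Set.univ) * Real.exp (Λ.real Qᶜ) =
      Real.exp (-(Λ.restrict Q).real Set.univ) := by
    rw [← Real.exp_add, measureReal_restrict_apply_univ, measureReal_compl hQ]
    ring_nf
  simp_rw [poissonMean, hterm]
  rw [← tsum_mul_tsum_eq_tsum_sum_antidiagonal_ennreal (fun i => (i ! : ℝ≥0∞)⁻¹ * Λ Qᶜ ^ i)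
      fun j => (j ! : ℝ≥0∞)⁻¹ * sampleIntegral (Λ.restrict Q) Φ (Fin j),
    tsum_inv_factorial_mul_pow (measure_ne_top Λ _), ← mul_assoc,
    ← ENNReal.ofReal_mul (Real.exp_pos _).le, ← measureReal_def, hexp]

lemma poissonMean_mono (Λ : Measure X) {Ψ : Finset X → ℝ≥0∞} (h : Φ ≤ Ψ) :
    poissonMean Λ Φ ≤ poissonMean Λ Ψ := by
  unfold poissonMean sampleIntegral
  gcongr
  exact h _

lemma poissonMean_sum {κ : Type*} (Λ : Measure X) (s : Finset κ) {Φ : κ → Finset X → ℝ≥0∞}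
    (hΦ : ∀ i ∈ s, MeasurableOnSamples (Φ i)) :
    poissonMean Λ (fun V => ∑ i ∈ s, Φ i V) = ∑ i ∈ s, poissonMean Λ (Φ i) := by
  have hsum : ∀ n, sampleIntegral Λ (fun V => ∑ i ∈ s, Φ i V) (Fin n) =
      ∑ i ∈ s, sampleIntegral Λ (Φ i) (Fin n) := fun n =>
    lintegral_finsetSum' _ fun i hi => (hΦ i hi n).aemeasurable
  simp_rw [poissonMean, hsum, Finset.mul_sum]
  rw [Summable.tsum_finsetSum fun _ _ => ENNReal.summable, Finset.mul_sum]

theorem poissonMean_restrict_le_sum {κ : Type*} [Fintype κ] (Λ : Measure X)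
    (hΦ : MeasurableOnSamples Φ)
    (hsub : ∀ V (W : κ → Finset X), V ⊆ Finset.univ.biUnion W → Φ V ≤ ∑ i, Φ (W i))
    {B : Set X} (hB : MeasurableSet B) {Q : κ → Set X} (hQ : ∀ i, MeasurableSet (Q i))
    (hfin : ∀ i, Λ (Q i) ≠ ∞) (hBQ : B ⊆ ⋃ i, Q i) :
    poissonMean (Λ.restrict B) Φ ≤ ∑ i, poissonMean (Λ.restrict (Q i)) Φ := by
  classical
  have : IsFiniteMeasure (Λ.restrict (⋃ i, Q i)) :=
    isFiniteMeasure_restrict.2 <| by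
      simpa using measure_biUnion_ne_top Set.finite_univ fun i _ => hfin i
  have hrestrict : ∀ D ⊆ ⋃ i, Q i, MeasurableSet D → poissonMean (Λ.restrict D) Φ =
      poissonMean (Λ.restrict (⋃ i, Q i)) fun V => Φ (V.filter (· ∈ D)) := fun D hD hDm => by
    rw [poissonMean_filter hΦ _ hDm, Measure.restrict_restrict_of_subset hD]
  rw [hrestrict B hBQ hB]
  simp_rw [fun i => hrestrict (Q i) (Set.subset_iUnion Q i) (hQ i)]
  rw [← poissonMean_sum _ _ fun i _ => hΦ.filter (hQ i)]
  refine poissonMean_mono _ fun V => hsub _ _ fun v hv => ?_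
  obtain ⟨hvV, hvB⟩ := Finset.mem_filter.1 hv
  obtain ⟨i, hi⟩ := Set.mem_iUnion.1 (hBQ hvB)
  exact Finset.mem_biUnion.2 ⟨i, Finset.mem_univ i, Finset.mem_filter.2 ⟨hvV, hi⟩⟩

lemma poissonMean_map {Y : Type*} [MeasurableSpace Y] [DecidableEq Y] {Ψ : Finset Y → ℝ≥0∞}
    (hΨ : MeasurableOnSamples Ψ) (Λ : Measure X) [IsFiniteMeasure Λ] {T : X → Y}
    (hT : Measurable T) :
    poissonMean (Λ.map T) Ψ = poissonMean Λ fun V => Ψ (V.image T) := by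
  have hmap : ∀ n, sampleIntegral (Λ.map T) Ψ (Fin n) =
      sampleIntegral Λ (fun V => Ψ (V.image T)) (Fin n) := fun n => by
    rw [sampleIntegral, ← Measure.pi_map_pi fun _ => hT.aemeasurable,
      lintegral_map (hΨ n) (by fun_prop)]
    simp_rw [sampleIntegral, Finset.image_image]
    rfl
  simp_rw [poissonMean, hmap, map_measureReal_apply hT .univ, Set.preimage_univ]

lemma sampleIntegral_smul (c : ℝ≥0) (μ : Measure X) [SigmaFinite μ] (Φ : Finset X → ℝ≥0∞)
    (n : ℕ) : sampleIntegral (c • μ) Φ (Fin n) = c ^ n * sampleIntegral μ Φ (Fin n) := by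
  have hpi : Measure.pi (fun _ : Fin n => c • μ) = c ^ n • Measure.pi fun _ : Fin n => μ :=
    Measure.pi_eq fun s _ => by
      simp_rw [Measure.smul_apply, Measure.pi_pi, ENNReal.smul_def, smul_eq_mul,
        Finset.prod_mul_distrib]
      simp
  rw [sampleIntegral, hpi, lintegral_smul_measure, sampleIntegral, ENNReal.smul_def, smul_eq_mul,
    ENNReal.coe_pow]

theorem poissonMean_smul (c : ℝ≥0) (μ : Measure X) [IsProbabilityMeasure μ]
    (Φ : Finset X → ℝ≥0∞) :
    poissonMean (c • μ) Φ = ∫⁻ n, sampleIntegral μ Φ (Fin n) ∂Po(c) := by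
  have hmass : (c • μ).real Set.univ = c := by
    rw [measureReal_nnreal_smul_apply, probReal_univ, mul_one]
  rw [lintegral_countable', poissonMean, ← ENNReal.tsum_mul_left, hmass]
  refine tsum_congr fun n => ?_
  have hweight : Po(c) {n} = ENNReal.ofReal (Real.exp (-c)) * ((n ! : ℝ≥0∞)⁻¹ * c ^ n) := by
    rw [poissonMeasure_singleton, mul_div_assoc, ENNReal.ofReal_mul (Real.exp_pos _).le,
      div_eq_inv_mul, ENNReal.ofReal_mul (by positivity), ENNReal.ofReal_inv_of_pos (by positivity)]
    simp [ENNReal.ofReal_pow]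
  rw [sampleIntegral_smul, hweight]
  ring

end PoissonMean

section PoissonMoments

open scoped NNReal Nat

variable {r : ℝ≥0} {f : ℕ → ℝ}

lemma poisson_weight_succ (r : ℝ) (n : ℕ) :
    Real.exp (-r) * r ^ (n + 1) / (n + 1)! * (n + 1 : ℕ) = r * (Real.exp (-r) * r ^ n / n !) := by
  rw [Nat.factorial_succ, Nat.cast_mul, pow_succ]
  field_simp

lemma integrable_natCast_mul_poissonMeasure (hf : Integrable (fun n => f (n + 1)) Po(r)) :
    Integrable (fun n : ℕ => n * f n) Po(r) := by
  rw [integrable_poissonMeasure_iff] at hf ⊢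
  rw [← summable_nat_add_iff 1]
  refine (hf.mul_left (r : ℝ)).congr fun n => ?_
  rw [norm_mul, Real.norm_natCast, ← mul_assoc, ← mul_assoc, ← poisson_weight_succ]

/-- The Stein–Chen identity. -/
lemma integral_natCast_mul_poissonMeasure (hf : Integrable (fun n => f (n + 1)) Po(r)) :
    ∫ n : ℕ, n * f n ∂Po(r) = r * ∫ n, f (n + 1) ∂Po(r) := by
  have hsum := hasSum_integral_poissonMeasure (integrable_natCast_mul_poissonMeasure hf)
  rw [← hsum.tsum_eq, hsum.summable.tsum_eq_zero_add, integral_poissonMeasure, ← tsum_mul_left]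
  simp only [smul_eq_mul, Nat.cast_zero, zero_mul, mul_zero, zero_add]
  refine tsum_congr fun n => ?_
  rw [← mul_assoc, ← mul_assoc, poisson_weight_succ]

lemma integrable_natCast_poissonMeasure : Integrable (fun n : ℕ => (n : ℝ)) Po(r) := by
  simpa using integrable_natCast_mul_poissonMeasure (f := 1) (integrable_const _)

lemma integral_natCast_poissonMeasure : ∫ n : ℕ, (n : ℝ) ∂Po(r) = r := by
  simpa using integral_natCast_mul_poissonMeasure (r := r) (f := 1) (integrable_const _)

lemma integrable_natCast_succ_poissonMeasure :
    Integrable (fun n : ℕ => ((n + 1 : ℕ) : ℝ)) Po(r) := by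
  simpa using integrable_natCast_poissonMeasure.add (integrable_const 1)

lemma memLp_natCast_poissonMeasure : MemLp (fun n : ℕ => (n : ℝ)) 2 Po(r) := by
  rw [memLp_two_iff_integrable_sq .of_discrete]
  simpa only [sq] using integrable_natCast_mul_poissonMeasure integrable_natCast_succ_poissonMeasure

lemma variance_natCast_poissonMeasure : Var[fun n : ℕ => (n : ℝ); Po(r)] = r := by
  have hsq : ∫ n : ℕ, (n : ℝ) * n ∂Po(r) = r * (r + 1) := by
    rw [integral_natCast_mul_poissonMeasure integrable_natCast_succ_poissonMeasure]
    simp_rw [Nat.cast_succ]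
    rw [integral_add integrable_natCast_poissonMeasure (integrable_const _),
      integral_natCast_poissonMeasure]
    simp
  rw [variance_eq_sub memLp_natCast_poissonMeasure, integral_natCast_poissonMeasure]
  simp only [Pi.pow_apply, sq, hsq]
  ring

lemma integral_abs_sub_integral_le_sqrt_variance {Ω : Type*} {mΩ : MeasurableSpace Ω}
    {μ : Measure Ω} [IsProbabilityMeasure μ] {X : Ω → ℝ} (hX : MemLp X 2 μ) :
    ∫ ω, |X ω - μ[X]| ∂μ ≤ √Var[X; μ] := by
  have hdev : MemLp (fun ω => |X ω - μ[X]|) 2 μ := (hX.sub (memLp_const _)).abs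
  have hnonneg := variance_nonneg (fun ω => |X ω - μ[X]|) μ
  rw [variance_eq_sub hdev] at hnonneg
  refine Real.le_sqrt_of_sq_le ?_
  rw [variance_eq_integral hX.aemeasurable]
  simpa [sq_abs] using hnonneg

lemma integrable_poissonMeasure_of_lipschitzWith {K : ℝ≥0} (hf : LipschitzWith K f) :
    Integrable f Po(r) := by
  refine ((integrable_natCast_poissonMeasure.const_mul (K : ℝ)).add
    (integrable_const |f 0|)).mono' .of_discrete (.of_forall fun n => ?_)
  have hdist : |f n - f 0| ≤ K * n := by simpa [Nat.dist_eq, Real.dist_eq] using hf.dist_le_mul n 0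
  calc ‖f n‖ ≤ |f n - f 0| + |f 0| := by simpa using abs_add_le (f n - f 0) (f 0)
    _ ≤ K * n + |f 0| := by gcongr

theorem abs_integral_poissonMeasure_sub_le {K : ℝ≥0} (hf : LipschitzWith K f) (n : ℕ) :
    |∫ m, f m ∂Po(n) - f n| ≤ K * √n := by
  have hint : Integrable (fun m : ℕ => |(m : ℝ) - n|) Po(n) :=
    (integrable_natCast_poissonMeasure.sub (integrable_const _)).abs
  calc |∫ m, f m ∂Po(n) - f n| = |∫ m, (f m - f n) ∂Po(n)| := by
        rw [integral_sub (integrable_poissonMeasure_of_lipschitzWith hf) (integrable_const _)]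
        simp
    _ ≤ ∫ m : ℕ, K * |(m : ℝ) - n| ∂Po(n) :=
        norm_integral_le_of_norm_le (f := fun m => f m - f n) (hint.const_mul _)
          (.of_forall fun m => hf.dist_le_mul m n)
    _ ≤ K * √n := by
        rw [integral_const_mul]
        gcongr
        simpa [integral_natCast_poissonMeasure, variance_natCast_poissonMeasure] using
          integral_abs_sub_integral_le_sqrt_variance (memLp_natCast_poissonMeasure (r := n))

end PoissonMoments

section UniformSamples

open scoped ENNReal NNReal

variable {d k : ℕ} {r : ℝ}

lemma measurableOnSamples_maxColorable (d k : ℕ) (r : ℝ) :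
    MeasurableOnSamples fun V : Finset (EuclideanSpace ℝ (Fin d)) =>
      (maxColorable d k r V : ℝ≥0∞) := fun n =>
  measurable_from_nat.comp (measurable_maxColorable_image d k r (Fin n))

lemma integrable_maxColorable_image {ι : Type*} [Fintype ι]
    (μ : Measure (ι → EuclideanSpace ℝ (Fin d))) [IsFiniteMeasure μ] :
    Integrable (fun x => (maxColorable d k r (Finset.univ.image x) : ℝ)) μ := by
  refine .of_bound (measurable_from_nat.comp
    (measurable_maxColorable_image d k r ι)).aestronglyMeasurable (Fintype.card ι)
      (.of_forall fun x => ?_)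
  rw [Real.norm_natCast]
  exact_mod_cast maxColorable_le_card.trans Finset.card_image_le

lemma volume_unitCube (d : ℕ) : volume (unitCube d) = 1 := by
  have hcube : unitCube d = (MeasurableEquiv.toLp 2 (Fin d → ℝ)).symm ⁻¹'
      Set.univ.pi fun _ => Set.Icc 0 1 := by
    ext x
    simp [unitCube, Pi.le_def, forall_and]
  rw [hcube, (EuclideanSpace.volume_preserving_symm_measurableEquiv_toLp
    (Fin d)).measure_preimage_equiv, volume_pi_pi]
  simp

instance : IsProbabilityMeasure (uniformCube d) :=
  ⟨by rw [uniformCube, Measure.restrict_apply_univ, volume_unitCube]⟩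

lemma measurePreserving_finTail {X : Type*} [MeasurableSpace X] (μ : Measure X)
    [IsProbabilityMeasure μ] (n : ℕ) :
    MeasurePreserving (Fin.tail : (Fin (n + 1) → X) → Fin n → X)
      (Measure.pi fun _ => μ) (Measure.pi fun _ => μ) :=
  measurePreserving_snd.comp (measurePreserving_piFinSuccAbove (fun _ => μ) 0)

lemma lipschitzWith_of_dist_succ_le {X : Type*} [PseudoMetricSpace X] {K : ℝ≥0} {f : ℕ → X}
    (hf : ∀ n, dist (f n) (f (n + 1)) ≤ K) : LipschitzWith K f := by
  have hle : ∀ m n, m ≤ n → dist (f m) (f n) ≤ K * dist m n := fun m n hmn => by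
    refine (dist_le_Ico_sum_of_dist_le (f := f) hmn fun _ _ => hf _).trans_eq ?_
    rw [Nat.dist_eq, abs_sub_comm, abs_of_nonneg (by simpa using hmn)]
    simp [hmn, mul_comm]
  refine .of_dist_le_mul fun m n => ?_
  obtain hmn | hnm := le_total m n
  · exact hle m n hmn
  · simpa only [dist_comm] using hle n m hnm

lemma abs_maxColorable_sub_maxColorable_insert_le (v : EuclideanSpace ℝ (Fin d))
    (V : Finset (EuclideanSpace ℝ (Fin d))) :
    |(maxColorable d k r V : ℝ) - maxColorable d k r (insert v V)| ≤ 1 := by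
  have hlower : (maxColorable d k r V : ℝ) ≤ maxColorable d k r (insert v V) := by
    gcongr
    exact Finset.subset_insert v V
  have hupper : (maxColorable d k r (insert v V) : ℝ) ≤ maxColorable d k r V + 1 :=
    mod_cast maxColorable_insert_le v V
  rw [abs_sub_le_iff]
  constructor <;> linarith

lemma lipschitzWith_EH (d k : ℕ) (r : ℝ) : LipschitzWith 1 (EH d k r) := by
  refine lipschitzWith_of_dist_succ_le fun n => ?_
  have htail := measurePreserving_finTail (uniformCube d) n
  have himage : ∀ x : Fin (n + 1) → EuclideanSpace ℝ (Fin d),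
      Finset.univ.image x = insert (x 0) (Finset.univ.image (Fin.tail x)) := fun x => by
    rw [Fin.univ_succ, Finset.cons_eq_insert, Finset.image_insert, Finset.map_eq_image,
      Finset.image_image]
    rfl
  have hint : Integrable (fun x : Fin (n + 1) → EuclideanSpace ℝ (Fin d) =>
      (maxColorable d k r (Finset.univ.image (Fin.tail x)) : ℝ))
      (Measure.pi fun _ => uniformCube d) :=
    htail.integrable_comp_of_integrable (integrable_maxColorable_image _)
  calc dist (EH d k r n) (EH d k r (n + 1))
      = ‖∫ x, ((maxColorable d k r (Finset.univ.image (Fin.tail x)) : ℝ) -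
          maxColorable d k r (Finset.univ.image x))
          ∂(Measure.pi fun _ : Fin (n + 1) => uniformCube d)‖ := by
        rw [integral_sub hint (integrable_maxColorable_image _), ← dist_eq_norm, EH, EH,
          ← htail.map_eq, integral_map htail.aemeasurable
            (integrable_maxColorable_image _).aestronglyMeasurable]
    _ ≤ 1 * (Measure.pi fun _ : Fin (n + 1) => uniformCube d).real Set.univ := by
        refine norm_integral_le_of_norm_le_const (.of_forall fun x => ?_)
        rw [himage]
        exact abs_maxColorable_sub_maxColorable_insert_le _ _
    _ = (1 : ℝ≥0) := by simp

lemma EH_nonneg (d k : ℕ) (r : ℝ) (n : ℕ) : 0 ≤ EH d k r n :=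
  integral_nonneg fun _ => Nat.cast_nonneg _

lemma ofReal_EH (d k : ℕ) (r : ℝ) (n : ℕ) :
    ENNReal.ofReal (EH d k r n) =
      sampleIntegral (uniformCube d) (fun V => maxColorable d k r V) (Fin n) := by
  rw [EH, ofReal_integral_eq_lintegral_ofReal (integrable_maxColorable_image _)
    (.of_forall fun _ => Nat.cast_nonneg _)]
  simp_rw [ENNReal.ofReal_natCast]
  rfl

lemma EF_eq_integral (d k : ℕ) (lam t : ℝ) :
    EF d k lam t = ∫ n, EH d k (1 / t) n ∂Po((lam * t ^ d).toNNReal) := by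
  rw [integral_poissonMeasure]
  rfl

lemma EF_nonneg (d k : ℕ) (lam t : ℝ) : 0 ≤ EF d k lam t := by
  rw [EF_eq_integral]
  exact integral_nonneg fun n => EH_nonneg d k _ n

lemma ofReal_EF (d k : ℕ) (lam t : ℝ) :
    ENNReal.ofReal (EF d k lam t) = poissonMean ((lam * t ^ d).toNNReal • uniformCube d)
      fun V => maxColorable d k (1 / t) V := by
  rw [EF_eq_integral, poissonMean_smul, ofReal_integral_eq_lintegral_ofReal
    (integrable_poissonMeasure_of_lipschitzWith (lipschitzWith_EH d k _))
    (.of_forall fun n => EH_nonneg d k _ n)]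
  simp_rw [ofReal_EH]

end UniformSamples

section Boxes

open scoped ENNReal NNReal

variable {d : ℕ}

/-- The closed axis-parallel cube of side `s` whose lowest corner is `a`. -/
def box (a : EuclideanSpace ℝ (Fin d)) (s : ℝ) : Set (EuclideanSpace ℝ (Fin d)) :=
  {x | ∀ i, x i ∈ Set.Icc (a i) (a i + s)}

lemma measurableSet_box (a : EuclideanSpace ℝ (Fin d)) (s : ℝ) : MeasurableSet (box a s) := by
  simp_rw [box, Set.ofPred_forall]
  exact .iInter fun i => measurableSet_Icc.preimage (by fun_prop)

lemma preimage_add_smul_box (a : EuclideanSpace ℝ (Fin d)) {s : ℝ} (hs : 0 < s) :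
    (fun y => a + s • y) ⁻¹' box a s = unitCube d := by
  ext y
  simp [box, unitCube, mul_nonneg_iff_of_pos_left hs, mul_le_iff_le_one_right hs]

lemma volume_restrict_box (a : EuclideanSpace ℝ (Fin d)) {s : ℝ} (hs : 0 < s) :
    volume.restrict (box a s) =
      (s ^ d).toNNReal • (uniformCube d).map fun y => a + s • y := by
  have hmap : (volume : Measure (EuclideanSpace ℝ (Fin d))).map (fun y => a + s • y) =
      (s ^ d).toNNReal⁻¹ • volume := by
    have hcomp : (fun y : EuclideanSpace ℝ (Fin d) => a + s • y) = (a + ·) ∘ (s • ·) := rfl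
    rw [hcomp, ← Measure.map_map (by fun_prop) (by fun_prop), Measure.map_addHaar_smul _ hs.ne',
      Measure.map_smul, map_add_left_eq_self, finrank_euclideanSpace_fin,
      abs_of_pos (by positivity), ENNReal.ofReal, Real.toNNReal_inv]
    rfl
  rw [uniformCube, ← preimage_add_smul_box a hs, ← Measure.restrict_map (by fun_prop)
    (measurableSet_box a s), hmap, Measure.restrict_smul, smul_inv_smul₀]
  simp [hs]

lemma volume_box_ne_top (a : EuclideanSpace ℝ (Fin d)) {s : ℝ} (hs : 0 < s) :
    volume (box a s) ≠ ∞ := by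
  rw [← isFiniteMeasure_restrict, volume_restrict_box a hs]
  infer_instance

lemma poissonMean_restrict_box {k : ℕ} {lam t : ℝ} (hlam : 0 ≤ lam) (ht : 0 < t)
    (a : EuclideanSpace ℝ (Fin d)) :
    poissonMean ((lam.toNNReal • volume).restrict (box a t)) (fun V => maxColorable d k 1 V) =
      ENNReal.ofReal (EF d k lam t) := by
  have hdist : ∀ x y, dist (a + t • x) (a + t • y) = t * dist x y := fun x y => by
    simp [dist_smul₀, abs_of_pos ht]
  rw [Measure.restrict_smul, volume_restrict_box a ht, smul_smul, ← Real.toNNReal_mul hlam,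
    ← Measure.map_smul, poissonMean_map (measurableOnSamples_maxColorable d k 1) _ (by fun_prop)]
  simp_rw [maxColorable_image_of_dist_eq_mul ht hdist]
  rw [ofReal_EF]

lemma exists_fin_mem_Icc_mul {t y : ℝ} {m : ℕ} (hm : m ≠ 0) (hy : y ∈ Set.Icc 0 (m * t)) :
    ∃ j : Fin m, y ∈ Set.Icc (j * t) (j * t + t) := by
  classical
  obtain ⟨n, rfl⟩ := Nat.exists_eq_succ_of_ne_zero hm
  have hlast : y ≤ n * t + t := by simpa [add_mul] using hy.2
  have hex : ∃ j : ℕ, y ≤ j * t + t := ⟨n, hlast⟩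
  suffices hfirst : Nat.find hex * t ≤ y from
    ⟨⟨Nat.find hex, Nat.lt_succ_of_le (Nat.find_min' hex hlast)⟩, hfirst, Nat.find_spec hex⟩
  cases hj : Nat.find hex with
  | zero => simpa using hy.1
  | succ i =>
    have hlt : i * t + t < y := not_le.1 (Nat.find_min hex (hj ▸ Nat.lt_succ_self i))
    simpa [add_mul] using hlt.le

lemma box_subset_iUnion_box {t T : ℝ} {m : ℕ} (hm : m ≠ 0) (hT : T ≤ m * t) :
    box (0 : EuclideanSpace ℝ (Fin d)) T ⊆
      ⋃ j : Fin d → Fin m, box (.toLp 2 fun i => j i * t) t := fun x hx => by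
  have hmem : ∀ i, x i ∈ Set.Icc 0 (m * t) := fun i =>
    ⟨(hx i).1, (hx i).2.trans (by simpa using hT)⟩
  choose j hj using fun i => exists_fin_mem_Icc_mul hm (hmem i)
  exact Set.mem_iUnion.2 ⟨j, hj⟩

theorem EF_le_pow_mul_EF {k : ℕ} {lam t T : ℝ} {m : ℕ} (hlam : 0 ≤ lam) (ht : 0 < t) (hT : 0 < T)
    (hTm : T ≤ m * t) : EF d k lam T ≤ m ^ d * EF d k lam t := by
  have hm : m ≠ 0 := by
    rintro rfl
    exact absurd hT (by simpa using hTm)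
  have hsub : ∀ V (W : (Fin d → Fin m) → Finset (EuclideanSpace ℝ (Fin d))),
      V ⊆ Finset.univ.biUnion W →
        (maxColorable d k 1 V : ℝ≥0∞) ≤ ∑ j, (maxColorable d k 1 (W j) : ℝ≥0∞) := fun V W hVW => by
    exact_mod_cast (maxColorable_mono hVW).trans (maxColorable_biUnion_le _ _)
  have hfin : ∀ a : EuclideanSpace ℝ (Fin d), (lam.toNNReal • volume) (box a t) ≠ ∞ := fun a => by
    rw [Measure.smul_apply]
    exact ENNReal.mul_ne_top ENNReal.coe_ne_top (volume_box_ne_top a ht)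
  rw [← ENNReal.ofReal_le_ofReal_iff (by have := EF_nonneg d k lam t; positivity)]
  calc ENNReal.ofReal (EF d k lam T)
      = poissonMean ((lam.toNNReal • volume).restrict (box 0 T))
          fun V => maxColorable d k 1 V := (poissonMean_restrict_box hlam hT 0).symm
    _ ≤ ∑ j : Fin d → Fin m, poissonMean ((lam.toNNReal • volume).restrict
          (box (.toLp 2 fun i => j i * t) t)) fun V => maxColorable d k 1 V :=
        poissonMean_restrict_le_sum _ (measurableOnSamples_maxColorable d k 1) hsub
          (measurableSet_box 0 T) (fun _ => measurableSet_box _ t) (fun _ => hfin _)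
          (box_subset_iUnion_box hm hTm)
    _ = ENNReal.ofReal (m ^ d * EF d k lam t) := by
        simp_rw [poissonMean_restrict_box hlam ht]
        simp [ENNReal.ofReal_mul, ENNReal.ofReal_pow]

end Boxes

section Limit

open scoped Topology

variable {d k : ℕ} {lam t T : ℝ}

lemma Fbar_nonneg (hlam : 0 ≤ lam) (ht : 0 ≤ t) : 0 ≤ Fbar d k lam t :=
  div_nonneg (EF_nonneg d k lam t) (by positivity)

lemma Fbar_le_pow_mul_Fbar (hlam : 0 ≤ lam) (ht : 0 < t) (hT : 0 < T) :
    Fbar d k lam T ≤ (1 + t / T) ^ d * Fbar d k lam t := by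
  set m := ⌈T / t⌉₊
  have hTm : T ≤ m * t := (div_le_iff₀ ht).1 (Nat.le_ceil _)
  have hmT : m * t / T ≤ 1 + t / T := by
    have hceil : m < T / t + 1 := Nat.ceil_lt_add_one (by positivity)
    calc m * t / T ≤ (T / t + 1) * t / T := by gcongr
      _ = 1 + t / T := by field_simp
  calc Fbar d k lam T ≤ m ^ d * EF d k lam t / (lam * T ^ d) := by
        unfold Fbar
        gcongr
        exact EF_le_pow_mul_EF hlam ht hT hTm
    _ = (m * t / T) ^ d * Fbar d k lam t := by
        rw [Fbar, div_pow, mul_pow]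
        field_simp
    _ ≤ (1 + t / T) ^ d * Fbar d k lam t := by
        have := Fbar_nonneg (d := d) (k := k) hlam ht.le
        gcongr

lemma tendsto_sInf_image_of_forall_eventually_lt {α β : Type*}
    [ConditionallyCompleteLinearOrder β] [TopologicalSpace β] [OrderTopology β] {l : Filter α}
    {f : α → β} {s : Set α} (hbdd : BddBelow (f '' s)) (hne : s.Nonempty) (hs : ∀ᶠ x in l, x ∈ s)
    (hlt : ∀ x ∈ s, ∀ b > f x, ∀ᶠ y in l, f y < b) :
    Tendsto f l (𝓝 (sInf (f '' s))) := by
  refine tendsto_order.2 ⟨fun b hb => ?_, fun b hb => ?_⟩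
  · filter_upwards [hs] with x hx using hb.trans_le (csInf_le hbdd (Set.mem_image_of_mem f hx))
  · obtain ⟨_, ⟨x, hx, rfl⟩, hxb⟩ := exists_lt_of_csInf_lt (hne.image f) hb
    exact hlt x hx b hxb

theorem tendsto_Fbar_aConst (d k : ℕ) (hlam : 0 ≤ lam) :
    Tendsto (Fbar d k lam) atTop (𝓝 (aConst d k lam)) := by
  have haConst : aConst d k lam = sInf (Fbar d k lam '' Set.Ioi 0) := by
    simp_rw [aConst, Set.image, Set.mem_Ioi, eq_comm]
  rw [haConst]
  refine tendsto_sInf_image_of_forall_eventually_lt ⟨0, ?_⟩ Set.nonempty_Ioi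
    (eventually_gt_atTop 0) fun t ht b hb => ?_
  · rintro _ ⟨t, ht, rfl⟩
    exact Fbar_nonneg hlam (le_of_lt ht)
  · have hbound : Tendsto (fun T => (1 + t / T) ^ d * Fbar d k lam t) atTop
        (𝓝 (Fbar d k lam t)) := by
      simpa using (((tendsto_const_nhds.div_atTop tendsto_id).const_add 1).pow d).mul_const
        (Fbar d k lam t)
    filter_upwards [hbound.eventually_lt_const hb, eventually_gt_atTop 0] with T hTb hT
    exact (Fbar_le_pow_mul_Fbar hlam ht hT).trans_lt hTb

lemma abs_EH_div_sub_Fbar_le {n : ℕ} (hn : lam * t ^ d = n) :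
    |EH d k (1 / t) n / n - Fbar d k lam t| ≤ (√n)⁻¹ := by
  rw [Fbar, hn, ← sub_div, abs_div, Nat.abs_cast, abs_sub_comm, EF_eq_integral, hn,
    Real.toNNReal_natCast]
  calc |∫ m, EH d k (1 / t) m ∂Po(n) - EH d k (1 / t) n| / n ≤ √n / n := by
        gcongr
        simpa using abs_integral_poissonMeasure_sub_le (lipschitzWith_EH d k (1 / t)) n
    _ = (√n)⁻¹ := by rw [Real.sqrt_div_self', one_div]

end Limit

/-- convergence of the expected coloring ratio for the binomial
model: `lim_{n→∞} E[H_{k,(ν/n)^{1/d}}(n)]/n = a_{k,ν}`. -/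
theorem tendsto_EH_div (d k : ℕ) (hd : 1 ≤ d) (hk : 1 ≤ k) (ν : ℝ) (hν : 0 < ν) :
    Tendsto (fun n : ℕ => EH d k ((ν / n) ^ ((1 : ℝ) / d)) n / n) atTop
      (nhds (aConst d k ν)) := by
  have hd' : (d : ℝ) ≠ 0 := by positivity
  let side (n : ℕ) : ℝ := (n / ν) ^ ((1 : ℝ) / d)
  have hside_atTop : Tendsto side atTop atTop :=
    (tendsto_rpow_atTop (by positivity)).comp (tendsto_natCast_atTop_atTop.atTop_div_const hν)
  have hmean (n : ℕ) : ν * side n ^ d = n := by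
    rw [← Real.rpow_natCast, ← Real.rpow_mul (by positivity), one_div_mul_cancel hd', Real.rpow_one]
    field_simp
  have hradius (n : ℕ) : 1 / side n = (ν / n) ^ ((1 : ℝ) / d) := by
    rw [one_div, ← Real.inv_rpow (by positivity), inv_div]
  have hdepoisson : Tendsto (fun n : ℕ => EH d k (1 / side n) n / n - Fbar d k ν (side n)) atTop
      (nhds 0) :=
    squeeze_zero_norm (fun n => abs_EH_div_sub_Fbar_le (hmean n))
      (Real.tendsto_sqrt_atTop.comp tendsto_natCast_atTop_atTop).inv_tendsto_atTop
  simpa [hradius] using hdepoisson.add ((tendsto_Fbar_aConst d k hν.le).comp hside_atTop)
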